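/- arXiv:1611.04385 — 2 statements merged into one kernel-verified Lean document; each statement's English description precedes it below -/
import Mathlib

section
/- The series ∑_{n=0}^∞ ((1)_n^5 / ((3/2)_n (5/3)_n (4/3)_n (7/4)_n (5/4)_n)) · (-16/27)^n · (172n² + 269n + 106) converges and equals 63·ζ(3). -/
noncomputable def poch (x : ℝ) (n : ℕ) : ℝ := ∏ i ∈ Finset.range n, (x + i)

noncomputable def zeta3 : ℝ := ∑' n : ℕ, 1 / ((n : ℝ) + 1) ^ 3

open Filter Topology

lemma poch_zero (x : ℝ) : poch x 0 = 1 := by simp [poch]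

lemma poch_succ (x : ℝ) (n : ℕ) : poch x (n + 1) = poch x n * (x + n) := by
  simp [poch, Finset.prod_range_succ]

lemma poch_shift (x : ℝ) (n : ℕ) : x * poch (x + 1) n = poch x n * (x + n) := by
  induction n with
  | zero => simp [poch_zero]
  | succ n ih =>
    rw [poch_succ, poch_succ]
    push_cast
    linear_combination (x + 1 + n) * ih

lemma poch_pos {x : ℝ} (hx : 0 < x) (n : ℕ) : 0 < poch x n :=
  Finset.prod_pos fun i _ => by positivity

lemma poch_abs_le {x y : ℝ} (h : ∀ i : ℕ, |x + i| ≤ y + i) (n : ℕ) : |poch x n| ≤ poch y n := by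
  unfold poch
  rw [Finset.abs_prod]
  exact Finset.prod_le_prod (fun i _ => abs_nonneg _) (fun i _ => h i)

lemma poch_le {x y : ℝ} (hx : 0 < x) (h : x ≤ y) (n : ℕ) : poch x n ≤ poch y n := by
  unfold poch
  exact Finset.prod_le_prod (fun i _ => by positivity) (fun i _ => by linarith)

/-- hypergeometric part of the summand -/
noncomputable def tt (n : ℕ) : ℝ :=
  poch 1 n ^ 5 /
        (poch (3/2) n * poch (5/3) n * poch (4/3) n * poch (7/4) n * poch (5/4) n) *
        (-16/27 : ℝ) ^ n

lemma tt_succ (n : ℕ) : tt (n + 1) = tt n * ((n + 1) ^ 5 * (-16/27) /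
    ((3/2 + n) * (5/3 + n) * (4/3 + n) * (7/4 + n) * (5/4 + n))) := by
  unfold tt
  simp only [poch_succ]
  have h1 := (poch_pos (x := 3/2) (by norm_num) n).ne'
  have h2 := (poch_pos (x := 5/3) (by norm_num) n).ne'
  have h3 := (poch_pos (x := 4/3) (by norm_num) n).ne'
  have h4 := (poch_pos (x := 7/4) (by norm_num) n).ne'
  have h5 := (poch_pos (x := 5/4) (by norm_num) n).ne'
  have g1 : (3/2 + n : ℝ) ≠ 0 := by positivity
  have g2 : (5/3 + n : ℝ) ≠ 0 := by positivity
  have g3 : (4/3 + n : ℝ) ≠ 0 := by positivity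
  have g4 : (7/4 + n : ℝ) ≠ 0 := by positivity
  have g5 : (5/4 + n : ℝ) ≠ 0 := by positivity
  rw [pow_succ (-16/27 : ℝ) n]
  generalize (-16/27 : ℝ) ^ n = z
  generalize (3/2 + n : ℝ) = y1 at *
  generalize (5/3 + n : ℝ) = y2 at *
  generalize (4/3 + n : ℝ) = y3 at *
  generalize (7/4 + n : ℝ) = y4 at *
  generalize (5/4 + n : ℝ) = y5 at *
  field_simp
  ring

lemma tt_abs (n : ℕ) : |tt n| ≤ (16/27) ^ n := by
  have p0 := poch_pos (x := 1) (by norm_num) n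
  have h1 := poch_le (x := 1) (y := 3/2) (by norm_num) (by norm_num) n
  have h2 := poch_le (x := 1) (y := 5/3) (by norm_num) (by norm_num) n
  have h3 := poch_le (x := 1) (y := 4/3) (by norm_num) (by norm_num) n
  have h4 := poch_le (x := 1) (y := 7/4) (by norm_num) (by norm_num) n
  have h5 := poch_le (x := 1) (y := 5/4) (by norm_num) (by norm_num) n
  have g1 := (poch_pos (x := 3/2) (by norm_num) n)
  have g2 := (poch_pos (x := 5/3) (by norm_num) n)
  have g3 := (poch_pos (x := 4/3) (by norm_num) n)
  have g4 := (poch_pos (x := 7/4) (by norm_num) n)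
  have g5 := (poch_pos (x := 5/4) (by norm_num) n)
  unfold tt
  rw [abs_mul, abs_pow]
  have e : |(-16/27 : ℝ)| = 16/27 := by norm_num [abs_div]
  rw [e, abs_of_pos (by positivity)]
  refine mul_le_of_le_one_left (by positivity) ?_
  rw [div_le_one (by positivity)]
  calc poch 1 n ^ 5 = poch 1 n * poch 1 n * poch 1 n * poch 1 n * poch 1 n := by ring
    _ ≤ _ := by gcongr

noncomputable def cc (n : ℕ) : ℝ :=
  tt n * ((3 * n + 1) * (3 * n + 2) * (4 * n + 3) / (6 * (2 * n + 1) ^ 2))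

lemma cc_succ (n : ℕ) : cc (n + 1) * (3 * (3 * n + 1) * (3 * n + 2) *
      ((-n - 1/2) * (n + 3/2) ^ 3 * (2 * n + 3/2) * (2 * n + 5/2))) =
    cc n * (8 * (n + 1) ^ 5 * (2 * n + 1) ^ 3) := by
  unfold cc
  rw [tt_succ]
  push_cast
  field_simp
  ring

noncomputable def hh (n k : ℕ) : ℝ :=
  cc n * (poch (1/2) k ^ 3 * poch (1/2 - n) k / (poch (3/2 + n) k ^ 3 * poch (3/2 + 2 * n) k))

lemma hne (n k : ℕ) : (k - n - 1/2 : ℝ) ≠ 0 := by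
  intro h
  have h2 : (2 * k : ℝ) = 2 * n + 1 := by linarith
  have h3 : 2 * k = 2 * n + 1 := by exact_mod_cast h2
  omega

lemma hh_succ_k (n k : ℕ) : hh n (k + 1) = hh n k *
    ((k + 1/2) ^ 3 * (k + 1/2 - n) / ((n + k + 3/2) ^ 3 * (2 * n + k + 3/2))) := by
  unfold hh
  simp only [poch_succ]
  have h1 := (poch_pos (x := 3/2 + n) (by positivity) k).ne'
  have h2 := (poch_pos (x := 3/2 + 2 * n) (by positivity) k).ne'
  have g1 : (3/2 + n + k : ℝ) ≠ 0 := by positivity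
  have g2 : (3/2 + 2 * n + k : ℝ) ≠ 0 := by positivity
  rw [show (n + k + 3/2 : ℝ) = 3/2 + n + k by ring,
    show (2 * n + k + 3/2 : ℝ) = 3/2 + 2 * n + k by ring]
  generalize (3/2 + n + k : ℝ) = y1 at *
  generalize (3/2 + 2 * n + k : ℝ) = y2 at *
  field_simp
  ring

lemma hh_succ_n (n k : ℕ) : hh (n + 1) k * (3 * (3 * n + 1) * (3 * n + 2) *
      ((k - n - 1/2) * (n + k + 3/2) ^ 3 * (2 * n + k + 3/2) * (2 * n + k + 5/2))) =
    hh n k * (8 * (n + 1) ^ 5 * (2 * n + 1) ^ 3) := by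
  unfold hh
  have hc := cc_succ n
  have h1 := (poch_pos (x := 3/2 + n) (by positivity) k).ne'
  have h2 := (poch_pos (x := 3/2 + 2 * n) (by positivity) k).ne'
  have s1 := poch_shift (-n - 1/2) k
  have s2 := poch_shift (3/2 + n) k
  have s3 := poch_shift (3/2 + 2 * n) k
  have s4 := poch_shift (3/2 + 2 * n + 1) k
  rw [show (-n - 1/2 + 1 : ℝ) = 1/2 - n by ring] at s1
  rw [show (3/2 + n + 1 : ℝ) = 3/2 + ((n + 1 : ℕ) : ℝ) by push_cast; ring] at s2
  rw [show (3/2 + 2 * n + 1 + 1 : ℝ) = 3/2 + 2 * ((n + 1 : ℕ) : ℝ) by push_cast; ring] at s4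
  have e0 : (1/2 - ((n + 1 : ℕ) : ℝ)) = -n - 1/2 := by push_cast; ring
  rw [e0]
  have h3 := (poch_pos (x := 3/2 + ((n + 1 : ℕ) : ℝ)) (by positivity) k).ne'
  have h4 := (poch_pos (x := 3/2 + 2 * ((n + 1 : ℕ) : ℝ)) (by positivity) k).ne'
  have n1 : (3/2 + n : ℝ) ≠ 0 := by positivity
  have n2 : (3/2 + 2 * n : ℝ) ≠ 0 := by positivity
  have n3 : (3/2 + 2 * n + 1 : ℝ) ≠ 0 := by positivity
  have n4 : (-n - 1/2 : ℝ) ≠ 0 := by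
    have : (0 : ℝ) ≤ n := by positivity
    intro h; linarith
  have m4 := hne n k
  have r2 : poch (3/2 + ((n + 1 : ℕ) : ℝ)) k = poch (3/2 + n) k * (3/2 + n + k) / (3/2 + n) := by
    field_simp at s2 ⊢; linarith
  have r3 : poch (3/2 + 2 * ((n + 1 : ℕ) : ℝ)) k =
      poch (3/2 + 2 * n) k * (3/2 + 2 * n + k) * (3/2 + 2 * n + 1 + k) /
        ((3/2 + 2 * n) * (3/2 + 2 * n + 1)) := by
    rw [eq_div_iff (by positivity)]
    linear_combination (3/2 + 2 * n : ℝ) * s4 + (3/2 + 2 * n + 1 + k : ℝ) * s3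
  have r1 : poch (-n - 1/2) k = (-n - 1/2) * poch (1/2 - n) k / (k - n - 1/2) := by
    rw [eq_div_iff m4]
    linear_combination -s1
  have g1 : (3/2 + n + k : ℝ) ≠ 0 := by positivity
  have g2 : (3/2 + 2 * n + k : ℝ) ≠ 0 := by positivity
  have g3 : (3/2 + 2 * n + 1 + k : ℝ) ≠ 0 := by positivity
  rw [r1, r2, r3]
  rw [show (n + k + 3/2 : ℝ) = 3/2 + n + k by ring,
    show (2 * n + k + 3/2 : ℝ) = 3/2 + 2 * n + k by ring,
    show (2 * n + k + 5/2 : ℝ) = 3/2 + 2 * n + 1 + k by ring]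
  rw [show (n + 3/2 : ℝ) = 3/2 + n by ring,
    show (2 * n + 3/2 : ℝ) = 3/2 + 2 * n by ring,
    show (2 * n + 5/2 : ℝ) = 3/2 + 2 * n + 1 by ring] at hc
  generalize (3/2 + n + k : ℝ) = y1 at *
  generalize (3/2 + 2 * n + k : ℝ) = y2 at *
  generalize (3/2 + 2 * n + 1 + k : ℝ) = y3 at *
  generalize (3/2 + n : ℝ) = z1 at *
  generalize (3/2 + 2 * n + 1 : ℝ) = z3 at *
  generalize (3/2 + 2 * n : ℝ) = z2 at *
  generalize (k - n - 1/2 : ℝ) = w at *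
  generalize (-n - 1/2 : ℝ) = v at *
  generalize poch z1 k = q1 at *
  generalize poch z2 k = q2 at *
  generalize poch (1/2 - n) k = q3 at *
  generalize poch (1/2) k = q4 at *
  have : cc (n + 1) * (q4 ^ 3 * (v * q3 / w) / ((q1 * y1 / z1) ^ 3 * (q2 * y2 * y3 / (z2 * z3)))) *
      (3 * (3 * n + 1) * (3 * n + 2) * (w * y1 ^ 3 * y2 * y3)) =
      cc (n + 1) * (3 * (3 * n + 1) * (3 * n + 2) * (v * z1 ^ 3 * z2 * z3)) *
        (q4 ^ 3 * q3 / (q1 ^ 3 * q2)) := by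
    field_simp
  rw [this, hc]
  ring

noncomputable def qq (n k : ℝ) : ℝ :=
  (-53/8 - 905/16 * n - 1529/8 * n ^ 2 - 1277/4 * n ^ 3 - 527/2 * n ^ 4 - 86 * n ^ 5)
  + (-3/2 - 57/4 * n - 189/4 * n ^ 2 - 66 * n ^ 3 - 33 * n ^ 4) * k
  + (15 + 72 * n + 225/2 * n ^ 2 + 57 * n ^ 3) * k ^ 2
  + (18 + 57 * n + 45 * n ^ 2) * k ^ 3 + (6 + 9 * n) * k ^ 4

noncomputable def ff (n k : ℕ) : ℝ := (1 + n + 2 * k) * hh n k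

noncomputable def gg (n k : ℕ) : ℝ :=
  hh n k * (qq n k / (3 * (3 * n + 1) * (3 * n + 2) * (k - n - 1/2) * (2 * n + k + 3/2)))

lemma wz (n k : ℕ) : ff (n + 1) k - ff n k = gg n (k + 1) - gg n k := by
  unfold ff gg
  have h := hh_succ_n n k
  have m := hne n k
  have m' : (k + 1/2 - n : ℝ) ≠ 0 := by
    have := hne n (k + 1)
    push_cast at this
    intro h
    apply this
    linarith
  have g1 : (n + k + 3/2 : ℝ) ≠ 0 := by positivity
  have g2 : (2 * n + k + 3/2 : ℝ) ≠ 0 := by positivity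
  have g3 : (2 * n + k + 5/2 : ℝ) ≠ 0 := by positivity
  have g4 : (3 * n + 1 : ℝ) ≠ 0 := by positivity
  have g5 : (3 * n + 2 : ℝ) ≠ 0 := by positivity
  rw [← eq_div_iff (by positivity)] at h
  rw [hh_succ_k, h]
  push_cast
  rw [show (k + 1 - n - 1/2 : ℝ) = k + 1/2 - n by ring,
    show (2 * n + (k + 1) + 3/2 : ℝ) = 2 * n + k + 5/2 by ring]
  have key : (1 + (n + 1) + 2 * k : ℝ) * (8 * (n + 1) ^ 5 * (2 * n + 1) ^ 3) -
      (1 + n + 2 * k) * (3 * (3 * n + 1) * (3 * n + 2) *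
      ((k - n - 1/2) * (n + k + 3/2) ^ 3 * (2 * n + k + 3/2) * (2 * n + k + 5/2))) =
      qq n (k + 1) * (k + 1/2) ^ 3 * (k - n - 1/2) - qq n k * (n + k + 3/2) ^ 3 * (2 * n + k + 5/2) := by
    unfold qq; ring
  generalize qq n k = q1 at *
  generalize qq n (k + 1) = q2 at *
  generalize hE : (8 * (n + 1) ^ 5 * (2 * n + 1) ^ 3 : ℝ) = E at *
  generalize (1 + (n + 1) + 2 * k : ℝ) = x1 at *
  generalize (1 + n + 2 * k : ℝ) = x2 at *
  generalize (n + k + 3/2 : ℝ) = y1 at *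
  generalize (2 * n + k + 3/2 : ℝ) = y2 at *
  generalize (2 * n + k + 5/2 : ℝ) = y3 at *
  generalize (k - n - 1/2 : ℝ) = y4 at *
  generalize (k + 1/2 - n : ℝ) = y5 at *
  generalize (k + 1/2 : ℝ) = y6 at *
  generalize (3 * n + 1 : ℝ) = y7 at *
  generalize (3 * n + 2 : ℝ) = y8 at *
  have : (x1 * (hh n k * E / (3 * y7 * y8 * (y4 * y1 ^ 3 * y2 * y3))) - x2 * hh n k) =
    hh n k * (x1 * E - x2 * (3 * y7 * y8 * (y4 * y1 ^ 3 * y2 * y3))) / (3 * y7 * y8 * (y4 * y1 ^ 3 * y2 * y3)) := by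
    field_simp
  rw [this, key]
  field_simp

lemma gg_zero (n : ℕ) : 72 * gg n 0 = tt n * (172 * (n : ℝ) ^ 2 + 269 * n + 106) := by
  unfold gg hh cc qq
  simp only [poch_zero]
  have : (-n - 1/2 : ℝ) = - ((2 * n + 1) / 2) := by ring
  push_cast
  rw [show (0 - n - 1/2 : ℝ) = - ((2 * n + 1) / 2) by ring,
    show (2 * n + 0 + 3/2 : ℝ) = (4 * n + 3) / 2 by ring]
  field_simp
  ring

lemma hh_abs (n k : ℕ) : |hh n k| ≤ |cc n| * (1 / (2 * k + 1) ^ 3) := by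
  unfold hh
  rw [abs_mul]
  gcongr
  have p1 := (poch_pos (x := 3/2 + n) (by positivity) k)
  have p2 := (poch_pos (x := 3/2 + 2 * n) (by positivity) k)
  have p3 := (poch_pos (x := 1/2) (by positivity) k)
  have p4 := (poch_pos (x := 3/2) (by positivity) k)
  have a1 : |poch (1/2 - n) k| ≤ poch (3/2 + 2 * n) k := by
    apply poch_abs_le
    intro i
    have : (0 : ℝ) ≤ i := by positivity
    have : (0 : ℝ) ≤ n := by positivity
    rw [abs_le]; constructor <;> linarith
  have a2 := poch_shift (1/2) k
  rw [show (1/2 + 1 : ℝ) = 3/2 by norm_num] at a2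
  have a3 := poch_le (x := 3/2) (y := 3/2 + n) (by norm_num) (by simp) k
  have a4 : poch (1/2) k * (2 * k + 1) ≤ poch (3/2 + n) k := by linarith
  rw [abs_div, abs_mul, abs_of_pos (show 0 < poch (1/2) k ^ 3 by positivity),
    abs_of_pos (show 0 < poch (3/2 + n) k ^ 3 * poch (3/2 + 2 * n) k by positivity),
    div_le_div_iff₀ (by positivity) (by positivity)]
  calc _ = (poch (1/2) k * (2 * k + 1)) ^ 3 * |poch (1/2 - n) k| := by ring
    _ ≤ poch (3/2 + n) k ^ 3 * poch (3/2 + 2 * n) k := by gcongr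
    _ = _ := by ring

lemma ff_abs (n k : ℕ) : |ff n k| ≤ |cc n| * (n + 1) * (1 / (2 * k + 1) ^ 2) := by
  unfold ff
  rw [abs_mul, abs_of_pos (by positivity)]
  calc (1 + n + 2 * k : ℝ) * |hh n k| ≤ ((n + 1) * (2 * k + 1)) * (|cc n| * (1 / (2 * k + 1) ^ 3)) := by
        have := hh_abs n k
        have : (1 + n + 2 * k : ℝ) ≤ (n + 1) * (2 * k + 1) := by
          have : (0 : ℝ) ≤ n * k := by positivity
          nlinarith
        gcongr
    _ = _ := by field_simp

lemma sum_odd_sq : Summable (fun k : ℕ => (1 / (2 * k + 1) ^ 2 : ℝ)) := by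
  have h : Summable (fun n : ℕ => (1 / (n : ℝ) ^ 2)) := Real.summable_one_div_nat_pow.2 (by norm_num)
  have := h.comp_injective (i := fun k : ℕ => 2 * k + 1) (by intro a b h; simpa using h)
  refine this.congr ?_
  intro k; simp

lemma ff_summable (n : ℕ) : Summable (ff n) :=
  Summable.of_norm_bounded (sum_odd_sq.mul_left _) (fun k => ff_abs n k)

lemma gg_tendsto (n : ℕ) : Tendsto (gg n) atTop (𝓝 0) := by
  obtain ⟨A, hA0, hA⟩ : ∃ A : ℝ, 0 ≤ A ∧ ∀ k : ℕ, |qq n k| ≤ A * (2 * k + 1) ^ 4 := by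
    unfold qq
    generalize (-53/8 - 905/16 * n - 1529/8 * n ^ 2 - 1277/4 * n ^ 3 - 527/2 * n ^ 4 - 86 * n ^ 5 : ℝ) = a
    generalize (-3/2 - 57/4 * n - 189/4 * n ^ 2 - 66 * n ^ 3 - 33 * n ^ 4 : ℝ) = b
    generalize (15 + 72 * n + 225/2 * n ^ 2 + 57 * n ^ 3 : ℝ) = c
    generalize (18 + 57 * n + 45 * n ^ 2 : ℝ) = d
    generalize (6 + 9 * n : ℝ) = e
    refine ⟨|a| + |b| + |c| + |d| + |e|, by positivity, fun k => ?_⟩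
    have hb : ∀ j : ℕ, j ≤ 4 → ∀ x : ℝ, |x * (k : ℝ) ^ j| ≤ |x| * (2 * k + 1) ^ 4 := by
      intro j hj x
      rw [abs_mul, abs_of_nonneg (show (0 : ℝ) ≤ (k : ℝ) ^ j by positivity)]
      gcongr
      have hk : (0 : ℝ) ≤ k := by positivity
      calc (k : ℝ) ^ j ≤ (2 * k + 1) ^ j := by gcongr; linarith
        _ ≤ (2 * k + 1) ^ 4 := pow_le_pow_right₀ (by linarith) hj
    have h0 := hb 0 (by norm_num) a
    have h1 := hb 1 (by norm_num) b
    have h2 := hb 2 (by norm_num) c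
    have h3 := hb 3 (by norm_num) d
    have h4 := hb 4 (by norm_num) e
    rw [pow_zero, mul_one] at h0
    rw [pow_one] at h1
    calc _ ≤ |a| + |b * k| + |c * k ^ 2| + |d * k ^ 3| + |e * k ^ 4| := by
          refine (abs_add_le _ _).trans ?_
          gcongr
          refine (abs_add_le _ _).trans ?_
          gcongr
          refine (abs_add_le _ _).trans ?_
          gcongr
          exact abs_add_le _ _
      _ ≤ _ := by linarith
  have hlim : Tendsto (fun k : ℕ => |cc n| * A * 16 * (1 / ((k : ℝ) + 1))) atTop (𝓝 0) := by
    simpa using (tendsto_one_div_add_atTop_nhds_zero_nat (𝕜 := ℝ)).const_mul (|cc n| * A * 16)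
  refine squeeze_zero_norm' ?_ hlim
  filter_upwards [eventually_ge_atTop (2 * n + 2)] with k hk
  have hk' : (2 * n + 2 : ℝ) ≤ k := by exact_mod_cast hk
  have hn : (0 : ℝ) ≤ n := by positivity
  have hD : ((2 * k + 1) / 4 * ((2 * k + 1) / 4) : ℝ) ≤
      3 * (3 * n + 1) * (3 * n + 2) * (k - n - 1/2) * (2 * n + k + 3/2) := by
    have b1 : (2 * k + 1 : ℝ) / 4 ≤ k - n - 1/2 := by linarith
    have b2 : (2 * k + 1 : ℝ) / 4 ≤ 2 * n + k + 3/2 := by linarith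
    have b3 : (1 : ℝ) ≤ 3 * (3 * n + 1) * (3 * n + 2) := by nlinarith
    have b0 : (0 : ℝ) ≤ k - n - 1/2 := by linarith
    calc _ = (1 : ℝ) * ((2 * k + 1) / 4) * ((2 * k + 1) / 4) := by ring
      _ ≤ _ := by gcongr
  unfold gg
  rw [Real.norm_eq_abs, abs_mul, abs_div, abs_of_pos (lt_of_lt_of_le (by positivity) hD)]
  calc _ ≤ (|cc n| * (1 / (2 * k + 1) ^ 3)) * ((A * (2 * k + 1) ^ 4) / ((2 * k + 1) / 4 * ((2 * k + 1) / 4))) := by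
        have := hh_abs n k
        have := hA k
        have hD' := lt_of_lt_of_le (show (0 : ℝ) < (2 * k + 1) / 4 * ((2 * k + 1) / 4) by positivity) hD
        have := div_nonneg (abs_nonneg (qq n k)) hD'.le
        gcongr
    _ = |cc n| * A * 16 * (1 / (2 * k + 1)) := by field_simp; norm_num
    _ ≤ _ := by gcongr; linarith

lemma ss_succ (n : ℕ) : ∑' k, ff n k - ∑' k, ff (n + 1) k = gg n 0 := by
  have h1 : HasSum (fun k => ff (n + 1) k - ff n k) (∑' k, ff (n + 1) k - ∑' k, ff n k) :=
    (ff_summable (n + 1)).hasSum.sub (ff_summable n).hasSum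
  have h2 := h1.tendsto_sum_nat
  simp only [wz, Finset.sum_range_sub] at h2
  have h3 := (gg_tendsto n).sub_const (gg n 0)
  have := tendsto_nhds_unique h2 h3
  linarith

lemma ss_tendsto : Tendsto (fun n => ∑' k, ff n k) atTop (𝓝 0) := by
  have hb : ∀ n : ℕ, ‖∑' k, ff n k‖ ≤
      (n ^ 4 * (16/27 : ℝ) ^ n + (16/27 : ℝ) ^ n) * 1000 * ∑' k : ℕ, (1 / (2 * k + 1) ^ 2 : ℝ) := by
    intro n
    have h1 : ‖∑' k, ff n k‖ ≤ ∑' k : ℕ, |cc n| * (n + 1) * (1 / (2 * k + 1) ^ 2 : ℝ) :=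
      tsum_of_norm_bounded (sum_odd_sq.mul_left _).hasSum (fun k => ff_abs n k)
    rw [tsum_mul_left] at h1
    refine h1.trans ?_
    have hs : 0 ≤ ∑' k : ℕ, (1 / (2 * k + 1) ^ 2 : ℝ) := tsum_nonneg fun k => by positivity
    refine mul_le_mul_of_nonneg_right ?_ hs
    unfold cc
    rw [abs_mul, abs_of_pos (show (0 : ℝ) < (3 * n + 1) * (3 * n + 2) * (4 * n + 3) / (6 * (2 * n + 1) ^ 2) by positivity)]
    have ht := tt_abs n
    have hp : ((3 * n + 1) * (3 * n + 2) * (4 * n + 3) / (6 * (2 * n + 1) ^ 2) * (n + 1) : ℝ) ≤ (n ^ 4 + 1) * 1000 := by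
      have hn : (0 : ℝ) ≤ n := by positivity
      have h6 : ((3 * n + 1) * (3 * n + 2) * (4 * n + 3) / (6 * (2 * n + 1) ^ 2) : ℝ) ≤ (3 * n + 1) * (3 * n + 2) * (4 * n + 3) :=
        div_le_self (by positivity) (by nlinarith)
      calc _ ≤ ((3 * n + 1) * (3 * n + 2) * (4 * n + 3) * (n + 1) : ℝ) := by gcongr
        _ ≤ _ := by nlinarith [sq_nonneg ((n : ℝ) ^ 2 - 1), sq_nonneg ((n : ℝ) - 1), mul_nonneg hn (sq_nonneg ((n : ℝ) - 1)), sq_nonneg ((n : ℝ) ^ 2 - n)]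
    calc _ = |tt n| * ((3 * n + 1) * (3 * n + 2) * (4 * n + 3) / (6 * (2 * n + 1) ^ 2) * (n + 1)) := by ring
      _ ≤ (16/27) ^ n * ((n ^ 4 + 1) * 1000) := by gcongr
      _ = _ := by ring
  refine squeeze_zero_norm hb ?_
  have l1 := tendsto_pow_const_mul_const_pow_of_abs_lt_one 4 (r := (16/27 : ℝ)) (by norm_num [abs_div])
  have l2 := tendsto_pow_atTop_nhds_zero_of_lt_one (r := (16/27 : ℝ)) (by norm_num) (by norm_num)
  have l3 := ((l1.add l2).mul_const 1000).mul_const (∑' k : ℕ, (1 / (2 * k + 1) ^ 2 : ℝ))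
  rw [add_zero, zero_mul, zero_mul] at l3
  exact l3

lemma ff_zero (k : ℕ) : ff 0 k = 1 / (2 * (k : ℝ) + 1) ^ 3 := by
  have a2 := poch_shift (1/2) k
  rw [show (1/2 + 1 : ℝ) = 3/2 by norm_num] at a2
  have p3 := (poch_pos (x := 1/2) (by positivity) k).ne'
  have a3 : poch (3/2) k = poch (1/2) k * (2 * k + 1) := by linarith
  have c0 : cc 0 = 1 := by
    unfold cc tt
    simp only [poch_zero]
    norm_num
  unfold ff hh
  rw [c0, Nat.cast_zero, mul_zero, add_zero, add_zero, sub_zero, a3]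
  generalize poch (1/2) k = p at *
  field_simp
  ring

lemma cube_summable : Summable (fun n : ℕ => 1 / ((n : ℝ) + 1) ^ 3) := by
  have h : Summable (fun n : ℕ => (1 / (n : ℝ) ^ 3)) :=
    Real.summable_one_div_nat_pow.2 (by norm_num)
  have h1 := (summable_nat_add_iff 1).2 h
  refine h1.congr fun n => ?_
  rw [Nat.cast_add, Nat.cast_one]

lemma ss_zero : ∑' k, ff 0 k = 7/8 * zeta3 := by
  have h1 : Summable (fun k : ℕ => 1 / (((2 * k : ℕ) : ℝ) + 1) ^ 3) :=
    cube_summable.comp_injective (i := fun k : ℕ => 2 * k) (by intro a b h; simpa using h)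
  have h2 : Summable (fun k : ℕ => 1 / (((2 * k + 1 : ℕ) : ℝ) + 1) ^ 3) :=
    cube_summable.comp_injective (i := fun k : ℕ => 2 * k + 1) (by intro a b h; simpa using h)
  have h := tsum_even_add_odd (f := fun n : ℕ => 1 / ((n : ℝ) + 1) ^ 3) h1 h2
  have e1 : ∑' k : ℕ, (1 / (((2 * k : ℕ) : ℝ) + 1) ^ 3) = ∑' k, ff 0 k := by
    refine tsum_congr fun k => ?_
    rw [ff_zero, Nat.cast_mul, Nat.cast_ofNat]
  have e2 : ∑' k : ℕ, (1 / (((2 * k + 1 : ℕ) : ℝ) + 1) ^ 3) = 1 / 8 * zeta3 := by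
    unfold zeta3
    rw [← tsum_mul_left]
    refine tsum_congr fun k => ?_
    push_cast
    rw [show (2 * k + 1 + 1 : ℝ) = 2 * (k + 1) by ring]
    field_simp
    norm_num
  rw [e1, e2] at h
  change _ = zeta3 at h
  linarith

lemma term_summable : Summable (fun n : ℕ => tt n * (172 * (n : ℝ) ^ 2 + 269 * n + 106)) := by
  have s0 := summable_pow_mul_geometric_of_norm_lt_one 0 (r := (16/27 : ℝ)) (by norm_num [abs_div])
  have s1 := summable_pow_mul_geometric_of_norm_lt_one 1 (r := (16/27 : ℝ)) (by norm_num [abs_div])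
  have s2 := summable_pow_mul_geometric_of_norm_lt_one 2 (r := (16/27 : ℝ)) (by norm_num [abs_div])
  refine Summable.of_norm_bounded (((s2.mul_left 172).add (s1.mul_left 269)).add (s0.mul_left 106)) ?_
  intro n
  rw [Real.norm_eq_abs, abs_mul, abs_of_pos (show (0 : ℝ) < 172 * (n : ℝ) ^ 2 + 269 * n + 106 by positivity)]
  have := tt_abs n
  calc _ ≤ (16/27) ^ n * (172 * (n : ℝ) ^ 2 + 269 * n + 106) := by gcongr
    _ = _ := by ring

theorem stmt0 :
    HasSum (fun n : ℕ =>
      poch 1 n ^ 5 /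
        (poch (3/2) n * poch (5/3) n * poch (4/3) n * poch (7/4) n * poch (5/4) n) *
        (-16/27 : ℝ) ^ n * (172 * (n : ℝ) ^ 2 + 269 * n + 106))
      (63 * zeta3) := by
  change HasSum (fun n : ℕ => tt n * (172 * (n : ℝ) ^ 2 + 269 * n + 106)) _
  rw [term_summable.hasSum_iff_tendsto_nat]
  have e : ∀ N : ℕ, ∑ n ∈ Finset.range N, tt n * (172 * (n : ℝ) ^ 2 + 269 * n + 106) =
      72 * (7/8 * zeta3 - ∑' k, ff N k) := by
    intro N
    rw [← ss_zero, ← Finset.sum_range_sub' (fun n => ∑' k, ff n k), Finset.mul_sum]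
    refine Finset.sum_congr rfl fun n _ => ?_
    rw [ss_succ, gg_zero]
  simp only [e]
  have := (ss_tendsto.const_sub (7/8 * zeta3)).const_mul 72
  convert this using 2
  ring
end

section
/- The series ∑_{n=0}^∞ ((1/2)_n^3 (1/3)_n (2/3)_n / (1)_n^5) · (27/64)^n · (74n² + 27n + 3) converges and equals 48/π². -/
open Filter Topology

namespace WZ

lemma poch_succ (x : ℝ) (n : ℕ) : poch x (n + 1) = poch x n * (x + n) := by
  simp [poch, Finset.prod_range_succ]

lemma poch_pos (x : ℝ) (hx : 0 < x) (n : ℕ) : 0 < poch x n := by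
  unfold poch
  exact Finset.prod_pos (fun i _ => by positivity)

/-- The hypergeometric kernel. -/
noncomputable def U (n k : ℕ) : ℝ :=
  poch (1/2) n ^ 2 * poch (1/2) (n + k) ^ 3 * ((3 * n + 2 * k).factorial : ℝ) /
    ((n.factorial : ℝ) * ((n + k).factorial : ℝ) ^ 3 * ((2 * n + k).factorial : ℝ) ^ 2
      * 4 ^ (n + k))

noncomputable def A (n k : ℝ) : ℝ :=
  96*k^5+192*k^4+144*k^3+48*k^2+6*k + n*(9+150*k+684*k^2+1152*k^3+672*k^4)
    + n^2*(117+1098*k+2736*k^2+2016*k^3)+n^3*(582+2976*k+3216*k^2)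
    + n^4*(1212+2664*k)+888*n^5

noncomputable def F (n k : ℕ) : ℝ :=
  12 * n * (14*(n:ℝ)^2+22*n*k+8*(k:ℝ)^2+3*n+2*k) / (3*n+2*k) * U n k

noncomputable def G (n k : ℕ) : ℝ :=
  if n = 0 ∧ k = 0 then 3 else U n k * A n k / ((3*n+2*k) * (2*n+k+1)^2)

lemma U_pos (n k : ℕ) : 0 < U n k := by
  have h1 := poch_pos (1/2) (by norm_num) n
  have h2 := poch_pos (1/2) (by norm_num) (n + k)
  unfold U
  positivity

lemma U_succ_right (n k : ℕ) : U n (k + 1) = U n k *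
    (((n:ℝ)+k+1/2)^3*(3*n+2*k+1)*(3*n+2*k+2) / (4*((n:ℝ)+k+1)^3*(2*n+k+1)^2)) := by
  unfold U
  rw [show n + (k + 1) = (n + k) + 1 by ring,
    show 3 * n + 2 * (k + 1) = (3 * n + 2 * k) + 1 + 1 by ring,
    show 2 * n + (k + 1) = (2 * n + k) + 1 by ring]
  simp only [Nat.factorial_succ, poch_succ]
  push_cast
  field_simp
  ring

lemma U_succ_left (n k : ℕ) : U (n + 1) k = U n k *
    (((n:ℝ)+1/2)^2*((n:ℝ)+k+1/2)^3*(3*n+2*k+1)*(3*n+2*k+2)*(3*n+2*k+3) /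
      (4*((n:ℝ)+1)*((n:ℝ)+k+1)^3*(2*n+k+1)^2*(2*n+k+2)^2)) := by
  unfold U
  rw [show n + 1 + k = (n + k) + 1 by ring,
    show 3 * (n + 1) + 2 * k = (3 * n + 2 * k) + 1 + 1 + 1 by ring,
    show 2 * (n + 1) + k = (2 * n + k) + 1 + 1 by ring]
  simp only [Nat.factorial_succ, poch_succ]
  push_cast
  field_simp
  ring

lemma U_zero_zero : U 0 0 = 1 := by simp [U, poch]

set_option maxRecDepth 20000 in
set_option maxHeartbeats 2000000 in
lemma wz (n k : ℕ) : F (n + 1) k - F n k = G n (k + 1) - G n k := by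
  by_cases h : n = 0 ∧ k = 0
  · obtain ⟨rfl, rfl⟩ := h
    have h1 := U_succ_left 0 0
    have h2 := U_succ_right 0 0
    rw [U_zero_zero] at h1 h2
    simp only [zero_add] at h1 h2
    simp only [F, G, A, h1, h2, zero_add, U_zero_zero]
    norm_num
  · have hG : G n k = U n k * A n k / ((3*n+2*k) * (2*n+k+1)^2) := if_neg h
    have hG' : G n (k + 1) = U n (k+1) * A n (k + 1 : ℕ) / ((3*n+2*(k+1 : ℕ)) * (2*n+(k+1 : ℕ)+1)^2) :=
      if_neg (by omega)
    have hpos : (0:ℝ) < 3 * n + 2 * k := by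
      have : 0 < 3 * n + 2 * k := by omega
      exact_mod_cast this
    rw [hG, hG']
    unfold F
    rw [U_succ_left, U_succ_right]
    push_cast
    unfold A
    have hu := (U_pos n k).ne'
    generalize U n k = u at *
    have hx : (0:ℝ) ≤ n := Nat.cast_nonneg n
    have hy : (0:ℝ) ≤ k := Nat.cast_nonneg k
    generalize (n:ℝ) = x at *
    generalize (k:ℝ) = y at *
    have e1 : 3 * (x + 1) + 2 * y ≠ 0 := by positivity
    have e2 : 3 * x + 2 * (y + 1) ≠ 0 := by positivity
    have e3 : 2 * x + (y + 1) + 1 ≠ 0 := by positivity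
    have e4 : 2 * x + y + 1 ≠ 0 := by positivity
    have e5 : 2 * x + y + 2 ≠ 0 := by positivity
    have e6 : x + y + 1 ≠ 0 := by positivity
    have e7 : x + 1 ≠ 0 := by positivity
    clear hG hG'
    have e8 := hpos.ne'
    obtain ⟨d, hd⟩ : ∃ d, d = 3 * x + 2 * y := ⟨_, rfl⟩
    rw [← hd] at e8 ⊢
    field_simp
    rw [hd]
    ring

/-- Auxiliary bounding sequence. -/
noncomputable def V (n k : ℕ) : ℝ := U n k * ((n:ℝ) + k + 1) ^ 2

lemma V_pos (n k : ℕ) : 0 < V n k := by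
  have := U_pos n k
  unfold V; positivity

lemma V_half (n k : ℕ) : V (n + 1) k ≤ V n k * (1/2) := by
  have hu := U_pos n k
  unfold V
  rw [U_succ_left, mul_assoc (U n k), mul_assoc (U n k)]
  refine mul_le_mul_of_nonneg_left ?_ hu.le
  push_cast
  rw [div_mul_eq_mul_div, div_le_iff₀ (by positivity), ← sub_nonneg]
  ring_nf
  positivity

lemma V_small (n k : ℕ) : V (n + 1) k ≤ V n k * (12 * (n + 1) / (k + 1)) := by
  have hu := U_pos n k
  unfold V
  rw [U_succ_left, mul_assoc (U n k), mul_assoc (U n k)]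
  refine mul_le_mul_of_nonneg_left ?_ hu.le
  push_cast
  rw [div_mul_eq_mul_div, ← mul_div_assoc, div_le_div_iff₀ (by positivity) (by positivity),
    ← sub_nonneg]
  ring_nf
  positivity

lemma W_eq (k : ℕ) : U 0 k = 1 / ((2 * k + 1) ^ 2 * Real.Wallis.W k ^ 2) := by
  induction k with
  | zero => simp [U_zero_zero, Real.Wallis.W]
  | succ k ih =>
    rw [U_succ_right, ih, Real.Wallis.W_succ]
    have := Real.Wallis.W_pos k
    push_cast
    have h0 : (2 * (k:ℝ) + 1) ≠ 0 := by positivity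
    have h1 : (2 * (k:ℝ) + 3) ≠ 0 := by positivity
    field_simp
    ring

lemma V_zero_le (k : ℕ) : V 0 k ≤ 1 := by
  induction k with
  | zero => simp [V, U_zero_zero]
  | succ k ih =>
    refine le_trans ?_ ih
    have hu := U_pos 0 k
    unfold V
    rw [U_succ_right, mul_assoc (U 0 k)]
    refine mul_le_mul_of_nonneg_left ?_ hu.le
    push_cast
    rw [div_mul_eq_mul_div, div_le_iff₀ (by positivity), ← sub_nonneg]
    ring_nf
    positivity

lemma V_le (n k : ℕ) : V n k ≤ (1/2) ^ n := by
  induction n with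
  | zero => simpa using V_zero_le k
  | succ n ih =>
    rw [pow_succ]
    exact (V_half n k).trans (by gcongr)

lemma G_nonneg (n k : ℕ) : 0 ≤ G n k := by
  have := U_pos n k
  unfold G A
  split_ifs <;> positivity

lemma G_le (n k : ℕ) : G n k ≤ 100 * V n k := by
  by_cases h : n = 0 ∧ k = 0
  · obtain ⟨rfl, rfl⟩ := h
    simp [G, V, U_zero_zero]
    norm_num
  · have hG : G n k = U n k * A n k / ((3*n+2*k) * (2*n+k+1)^2) := if_neg h
    have hpos : (0:ℝ) < 3 * n + 2 * k := by
      have : 0 < 3 * n + 2 * k := by omega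
      exact_mod_cast this
    have hu := U_pos n k
    rw [hG, V, mul_div_assoc, mul_left_comm]
    refine mul_le_mul_of_nonneg_left ?_ hu.le
    rw [div_le_iff₀ (by positivity), ← sub_nonneg]
    unfold A
    ring_nf
    positivity

lemma F_zero (k : ℕ) : F 0 k = 0 := by simp [F]

lemma F_nonneg (n k : ℕ) : 0 ≤ F n k := by
  have := U_pos n k
  unfold F; positivity

lemma F_le (n k : ℕ) : F n k ≤ 100 * V n k := by
  rcases Nat.eq_zero_or_pos n with rfl | h
  · rw [F_zero]
    have := V_pos 0 k
    positivity
  · have hn : (0:ℝ) < n := by exact_mod_cast h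
    have hu := U_pos n k
    rw [F, V, mul_comm, mul_left_comm]
    refine mul_le_mul_of_nonneg_left ?_ hu.le
    rw [div_le_iff₀ (by positivity), ← sub_nonneg]
    ring_nf
    positivity

lemma G_bound (n k : ℕ) : ‖G n k‖ ≤ 100 * (1/2) ^ n := by
  rw [Real.norm_of_nonneg (G_nonneg n k)]
  exact (G_le n k).trans (by gcongr; exact V_le n k)

lemma summable_bound : Summable (fun n : ℕ => (100:ℝ) * (1/2) ^ n) :=
  (summable_geometric_of_lt_one (by norm_num) (by norm_num)).mul_left _

lemma G_summable (k : ℕ) : Summable (fun n => G n k) :=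
  Summable.of_norm_bounded summable_bound (fun n => G_bound n k)

lemma F_tendsto (k : ℕ) : Tendsto (fun n => F n k) atTop (𝓝 0) :=
  squeeze_zero (fun n => F_nonneg n k)
    (fun n => (F_le n k).trans (mul_le_mul_of_nonneg_left (V_le n k) (by norm_num)))
    summable_bound.tendsto_atTop_zero

lemma S_step (k : ℕ) : ∑' n, G n (k + 1) = ∑' n, G n k := by
  have h := ((G_summable (k + 1)).hasSum.sub (G_summable k).hasSum).tendsto_sum_nat
  have h2 : (fun N => ∑ n ∈ Finset.range N, (G n (k + 1) - G n k)) = fun N => F N k := by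
    funext N
    simp_rw [← wz]
    rw [Finset.sum_range_sub (fun n => F n k), F_zero, sub_zero]
  rw [h2] at h
  have := tendsto_nhds_unique h (F_tendsto k)
  linarith

lemma S_const (k : ℕ) : ∑' n, G n k = ∑' n, G n 0 := by
  induction k with
  | zero => rfl
  | succ k ih => rw [S_step, ih]

lemma G_zero (k : ℕ) : G 0 k = 3 * ((2 * k + 1) / (k + 1)) ^ 2 / Real.Wallis.W k ^ 2 := by
  by_cases hk : k = 0
  · subst hk
    simp [G, Real.Wallis.W]
  · have hG : G 0 k = U 0 k * A (0:ℕ) k / ((3*(0:ℕ)+2*k) * (2*(0:ℕ)+k+1)^2) :=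
      if_neg (by simp [hk])
    have := Real.Wallis.W_pos k
    have hk' : (0:ℝ) < k := by exact_mod_cast Nat.pos_of_ne_zero hk
    rw [hG, W_eq]
    unfold A
    push_cast
    have h0 : (2 * (k:ℝ) + 1) ≠ 0 := by positivity
    simp only [mul_zero, zero_add]
    field_simp
    ring

lemma G_zero_tendsto : Tendsto (fun k => G 0 k) atTop (𝓝 (48 / Real.pi ^ 2)) := by
  have h1 : Tendsto (fun k : ℕ => (2 * (k:ℝ) + 1) / (k + 1)) atTop (𝓝 2) := by
    have : Tendsto (fun k : ℕ => 2 - 1 / ((k:ℝ) + 1)) atTop (𝓝 (2 - 0)) :=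
      tendsto_const_nhds.sub tendsto_one_div_add_atTop_nhds_zero_nat
    rw [sub_zero] at this
    refine this.congr (fun k => ?_)
    field_simp
    ring
  have h2 := ((h1.pow 2).const_mul 3).div (Real.tendsto_prod_pi_div_two.pow 2)
    (by have := Real.pi_pos; positivity)
  have e : (3 * 2 ^ 2 / (Real.pi / 2) ^ 2 : ℝ) = 48 / Real.pi ^ 2 := by
    have := Real.pi_pos
    field_simp
    norm_num
  rw [e] at h2
  refine h2.congr (fun k => ?_)
  rw [G_zero]
  rfl

lemma G_succ_tendsto (n : ℕ) : Tendsto (fun k => G (n + 1) k) atTop (𝓝 0) := by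
  have h : Tendsto (fun k : ℕ => (100 * (12 * ((n:ℝ) + 1))) * (1 / ((k:ℝ) + 1))) atTop
      (𝓝 ((100 * (12 * ((n:ℝ) + 1))) * 0)) :=
    tendsto_one_div_add_atTop_nhds_zero_nat.const_mul _
  rw [mul_zero] at h
  refine squeeze_zero (fun k => G_nonneg _ _) (fun k => ?_) h
  have h1 : V n k ≤ 1 := (V_le n k).trans (pow_le_one₀ (by norm_num) (by norm_num))
  calc G (n + 1) k ≤ 100 * V (n + 1) k := G_le _ _
    _ ≤ 100 * (V n k * (12 * (n + 1) / (k + 1))) := by gcongr; exact V_small n k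
    _ ≤ 100 * (1 * (12 * (n + 1) / (k + 1))) := by gcongr
    _ = _ := by ring

lemma S_tendsto : Tendsto (fun k => ∑' n, G n k) atTop (𝓝 (48 / Real.pi ^ 2)) := by
  have h := tendsto_tsum_of_dominated_convergence (𝓕 := atTop)
    (f := fun (k : ℕ) (n : ℕ) => G n k)
    (g := fun n : ℕ => if n = 0 then 48 / Real.pi ^ 2 else 0) summable_bound
    (by
      intro n
      cases n with
      | zero => simpa using G_zero_tendsto
      | succ n => simpa using G_succ_tendsto n)
    (Eventually.of_forall (fun k n => G_bound n k))
  rwa [tsum_ite_eq] at h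

lemma S_zero : ∑' n, G n 0 = 48 / Real.pi ^ 2 := by
  have h := S_tendsto
  simp_rw [S_const] at h
  exact tendsto_nhds_unique tendsto_const_nhds h

lemma U_zero_right (n : ℕ) : U n 0 =
    poch (1/2) n ^ 3 * poch (1/3) n * poch (2/3) n / poch 1 n ^ 5 * (27/64 : ℝ) ^ n := by
  induction n with
  | zero => simp [U_zero_zero, poch]
  | succ n ih =>
    rw [U_succ_left, ih]
    simp only [poch_succ, pow_succ]
    have := poch_pos 1 one_pos n
    push_cast
    have h0 : (2 * (n:ℝ) + 1) ≠ 0 := by positivity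
    have h1 : (1 + (n:ℝ)) ≠ 0 := by positivity
    have h2 : ((n:ℝ) + 1) ≠ 0 := by positivity
    simp only [mul_zero, add_zero]
    field_simp
    ring

lemma G_zero_right (n : ℕ) : G n 0 =
    poch (1/2) n ^ 3 * poch (1/3) n * poch (2/3) n / poch 1 n ^ 5 *
        (27/64 : ℝ) ^ n * (74 * (n : ℝ) ^ 2 + 27 * n + 3) := by
  rw [← U_zero_right]
  by_cases hn : n = 0
  · subst hn
    simp [G, U_zero_zero]
  · have hG : G n 0 = U n 0 * A n (0:ℕ) / ((3*n+2*(0:ℕ)) * (2*n+(0:ℕ)+1)^2) :=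
      if_neg (by simp [hn])
    have hn' : (n:ℝ) ≠ 0 := by exact_mod_cast hn
    have h0 : (2 * (n:ℝ) + 1) ≠ 0 := by positivity
    rw [hG]
    unfold A
    push_cast
    simp only [mul_zero, add_zero]
    field_simp
    ring

end WZ

theorem stmt3 :
    HasSum (fun n : ℕ =>
      poch (1/2) n ^ 3 * poch (1/3) n * poch (2/3) n / poch 1 n ^ 5 *
        (27/64 : ℝ) ^ n * (74 * (n : ℝ) ^ 2 + 27 * n + 3))
      (48 / Real.pi ^ 2) := by
  have h := (WZ.G_summable 0).hasSum
  rw [WZ.S_zero] at h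
  simpa only [WZ.G_zero_right] using h
end
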